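/- Let D be a dendriform algebra and V = ℂx a one-dimensional vector space with basis x. Given linear maps l₁,l₂,r₁,r₂ : D → ℂ and p₁,p₂,q₁,q₂ : D → D, elements a₁,a₂ ∈ D and scalars k₁,k₂ ∈ ℂ, define an extending datum of D through V by a▷₁x := l₁(a)x, a▷₂x := l₂(a)x, x◁₁a := r₁(a)x, x◁₂a := r₂(a)x, x⇀₁a := p₁(a), x⇀₂a := p₂(a), a↼₁x := q₁(a), a↼₂x := q₂(a), f₁(x,x) := a₁, f₂(x,x) := a₂, x≻_Vx := k₁x, x≺_Vx := k₂x (all maps extended bilinearly). Then this extending datum is a dendriform extending structure of D through V (i.e., the unified product D♮V is a dendriform algebra) if and only if the following conditions (F1)–(F12) hold for all a,b ∈ D (writing ⋆ := ≻+≺): (F1) l₁(a⋆b)=l₁(a)l₁(b), l₂(a≺b)=l₂(a)(l₁(b)+l₂(b)), l₂(a≻b)=l₁(a)l₂(b), (r₁(a)+r₂(a))r₁(b)=r₁(a≻b), r₂(a)r₂(b)=r₂(a⋆b), r₁(a)r₂(b)=r₁(a≺b), l₂(a)r₁(b)=0; (F2) q₁(a⋆b)=a≻q₁(b)+l₁(b)q₁(a),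 q₂(a≺b)=a≺(q₁(b)+q₂(b))+(l₁(b)+l₂(b))q₂(a), q₂(a≻b)=a≻q₂(b)+l₂(b)q₁(a); (F3) (p₁(a)+p₂(a))≻b+(r₁(a)+r₂(a))p₁(b)=p₁(a≻b), p₂(a)≺b+r₂(a)p₂(b)=p₂(a⋆b), p₁(a)≺b+r₁(a)p₂(b)=p₁(a≺b); (F4) (q₁(a)+q₂(a))≻b+(l₁(a)+l₂(a))p₁(b)=a≻p₁(b)+r₁(b)q₁(a), q₂(a)≺b+l₂(a)p₂(b)=a≺(p₁(b)+p₂(b))+(r₁(b)+r₂(b))q₂(a), q₁(a)≺b+l₁(a)p₂(b)=a≻p₂(b)+r₂(b)q₁(a); (F5) (a₁+a₂)≻a+(k₁+k₂)p₁(a)=p₁(p₁(a))+r₁(a)a₁, a₂≺a+k₂p₂(a)=p₂(p₁(a)+p₂(a))+(r₁(a)+r₂(a))a₂, a₁≺a+k₁p₂(a)=p₁(p₂(a))+r₂(a)a₁; (F6) k₂r₁(a)=r₁(p₁(a)), r₂(p₁(a)+p₂(a))+k₂r₁(a)=0, r₁(p₂(a))=0; (F7) q₁(q₁(a)+q₂(a))+(l₁(a)+l₂(a))a₁=a≻a₁+k₁q₁(a),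 q₂(q₂(a))+l₂(a)a₂=a≺(a₁+a₂)+(k₁+k₂)q₂(a), q₂(q₁(a))+l₁(a)a₂=a≻a₂+k₂q₁(a); (F8) l₁(q₁(a)+q₂(a))+k₁l₂(a)=0, l₂(q₂(a))=k₁l₂(a), l₂(q₁(a))=0; (F9) q₁(p₁(a)+p₂(a))+(r₁(a)+r₂(a))a₁=p₁(q₁(a))+l₁(a)a₁, q₂(p₂(a))+r₂(a)a₂=p₂(q₁(a)+q₂(a))+(l₁(a)+l₂(a))a₂, q₂(p₁(a))+r₁(a)a₂=p₁(q₂(a))+l₂(a)a₁; (F10) l₁(p₁(a)+p₂(a))+(r₁(a)+r₂(a))k₁=r₁(q₁(a))+k₁l₁(a), l₂(p₂(a))+r₂(a)k₂=r₂(q₁(a)+q₂(a))+k₂(l₁(a)+l₂(a)), l₂(p₁(a))+r₁(a)k₂=r₁(q₂(a))+k₁l₂(a); (F11) q₁(a₁+a₂)+k₂a₁=p₁(a₁), q₂(a₂)=p₂(a₁+a₂)+k₁a₂, q₂(a₁)+k₁a₂=p₁(a₂)+k₂a₁; (F12) l₁(a₁+a₂)+k₂k₁=r₁(a₁), l₂(a₂)=r₂(a₁+a₂)+k₂k₁,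 l₂(a₁)=r₁(a₂). Moreover, this assignment is a bijection from the set of such 12-tuples satisfying (F1)–(F12) (the flag datums of D) onto the set of dendriform extending structures of D through V. -/

import Mathlib

/-! The unified product `D ♮ ℂ` is spanned by the vectors `(a, 0)` with `a ∈ D` and by `(0, 1)`.
Its operations are bilinear, so both sides of each dendriform axiom are trilinear and the axiom
need only be tested on these generators (`trilinear_eq`, `dendAxioms_of_generators`). A triple of
generators has one of eight shapes; the shape `D D D` is the dendriform algebra `D` itself, and the
two components of the three axioms on the other seven shapes are exactly (F1)–(F12) after
cancelling common terms (`flagConds_of_dendAxioms`, `dendAxioms_of_flagConds`).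

For the bijection, a bilinear map out of a product with a factor `ℂ` is determined by its values at
`1 : ℂ`, so every extending datum with bilinear maps comes from exactly one flag tuple
(`flagDatum_injective`, `flagDatum_toFlagTuple`). -/

/- Common framework for dendriform algebras, extending structures and unified
products, over the field `ℂ`.  All operations are encoded as plain functions
together with bilinearity predicates. -/

namespace DendriformES

section Basic

variable {M N P : Type*} [AddCommGroup M] [Module ℂ M] [AddCommGroup N] [Module ℂ N]
  [AddCommGroup P] [Module ℂ P]

/-- A map `f : M → N → P` is (ℂ-)bilinear. -/
def IsBilinear (f : M → N → P) : Prop :=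
  (∀ a b y, f (a + b) y = f a y + f b y) ∧
  (∀ (c : ℂ) (a : M) (y : N), f (c • a) y = c • f a y) ∧
  (∀ a x y, f a (x + y) = f a x + f a y) ∧
  (∀ (c : ℂ) (a : M) (x : N), f a (c • x) = c • f a x)

end Basic

section Dend

variable {D V : Type*} [AddCommGroup D] [Module ℂ D] [AddCommGroup V] [Module ℂ V]

/-- The three dendriform axioms for a pair of binary operations `s = ≻`, `p = ≺`. -/
def DendAxioms (s p : D → D → D) : Prop :=
  (∀ x y z, s (s x y + p x y) z = s x (s y z)) ∧
  (∀ x y z, p (p x y) z = p x (s y z + p y z)) ∧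
  (∀ x y z, p (s x y) z = s x (p y z))

/-- `(D, s, p)` is a dendriform algebra: both operations are bilinear and the
three dendriform axioms hold. -/
def IsDendriform (s p : D → D → D) : Prop :=
  IsBilinear s ∧ IsBilinear p ∧ DendAxioms s p

/-- `(V, t1, t2)` is a left module over the dendriform algebra `(D, s, p)`. -/
def IsLeftDModule (s p : D → D → D) (t1 t2 : D → V → V) : Prop :=
  IsBilinear t1 ∧ IsBilinear t2 ∧
  (∀ a b x, t1 (s a b + p a b) x = t1 a (t1 b x)) ∧
  (∀ a b x, t2 (p a b) x = t2 a (t1 b x + t2 b x)) ∧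
  (∀ a b x, t2 (s a b) x = t1 a (t2 b x))

/-- `(V, l1, l2)` is a right module over the dendriform algebra `(D, s, p)`. -/
def IsRightDModule (s p : D → D → D) (l1 l2 : V → D → V) : Prop :=
  IsBilinear l1 ∧ IsBilinear l2 ∧
  (∀ a b x, l1 (l1 x a + l2 x a) b = l1 x (s a b)) ∧
  (∀ a b x, l2 (l2 x a) b = l2 x (s a b + p a b)) ∧
  (∀ a b x, l2 (l1 x a) b = l1 x (p a b))

/-- `(V, t1, t2, l1, l2)` is a bimodule over the dendriform algebra `(D, s, p)`. -/
def IsDBimodule (s p : D → D → D) (t1 t2 : D → V → V) (l1 l2 : V → D → V) : Prop :=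
  IsLeftDModule s p t1 t2 ∧ IsRightDModule s p l1 l2 ∧
  (∀ a b x, l1 (t1 a x + t2 a x) b = t1 a (l1 x b)) ∧
  (∀ a b x, l2 (t2 a x) b = t2 a (l1 x b + l2 x b)) ∧
  (∀ a b x, l2 (t1 a x) b = t1 a (l2 x b))

/-- A morphism of dendriform algebras: a linear map preserving both operations. -/
def IsDendMorphism (s p : D → D → D) (s' p' : V → V → V) (φ : D → V) : Prop :=
  IsLinearMap ℂ φ ∧ (∀ x y, φ (s x y) = s' (φ x) (φ y)) ∧
    (∀ x y, φ (p x y) = p' (φ x) (φ y))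

end Dend

/-- An extending datum `Ω(D,V)` of `D` through `V`: twelve maps
`tr1, tr2 = ▷₁, ▷₂ : D×V→V`, `sl1, sl2 = ◁₁, ◁₂ : V×D→V`,
`hr1, hr2 = ⇀₁, ⇀₂ : V×D→D`, `hl1, hl2 = ↼₁, ↼₂ : D×V→D`,
`cf1, cf2 = f₁, f₂ : V×V→D`, `sv, pv = ≻_V, ≺_V : V×V→V`. -/
structure ExtendingDatum (D V : Type*) [AddCommGroup D] [Module ℂ D]
    [AddCommGroup V] [Module ℂ V] where
  tr1 : D → V → V
  tr2 : D → V → V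
  sl1 : V → D → V
  sl2 : V → D → V
  hr1 : V → D → D
  hr2 : V → D → D
  hl1 : D → V → D
  hl2 : D → V → D
  cf1 : V → V → D
  cf2 : V → V → D
  sv : V → V → V
  pv : V → V → V

section Datum

variable {D V : Type*} [AddCommGroup D] [Module ℂ D] [AddCommGroup V] [Module ℂ V]

/-- All twelve maps of an extending datum are bilinear. -/
def ExtendingDatum.Bilinear (Ω : ExtendingDatum D V) : Prop :=
  IsBilinear Ω.tr1 ∧ IsBilinear Ω.tr2 ∧ IsBilinear Ω.sl1 ∧ IsBilinear Ω.sl2 ∧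
  IsBilinear Ω.hr1 ∧ IsBilinear Ω.hr2 ∧ IsBilinear Ω.hl1 ∧ IsBilinear Ω.hl2 ∧
  IsBilinear Ω.cf1 ∧ IsBilinear Ω.cf2 ∧ IsBilinear Ω.sv ∧ IsBilinear Ω.pv

/-- The operation `⪰` of the unified product `D ♮ V`. -/
def uSucc (s : D → D → D) (Ω : ExtendingDatum D V) : D × V → D × V → D × V :=
  fun u v =>
    (s u.1 v.1 + Ω.hl1 u.1 v.2 + Ω.hr1 u.2 v.1 + Ω.cf1 u.2 v.2,
     Ω.tr1 u.1 v.2 + Ω.sl1 u.2 v.1 + Ω.sv u.2 v.2)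

/-- The operation `⪯` of the unified product `D ♮ V`. -/
def uPrec (p : D → D → D) (Ω : ExtendingDatum D V) : D × V → D × V → D × V :=
  fun u v =>
    (p u.1 v.1 + Ω.hl2 u.1 v.2 + Ω.hr2 u.2 v.1 + Ω.cf2 u.2 v.2,
     Ω.tr2 u.1 v.2 + Ω.sl2 u.2 v.1 + Ω.pv u.2 v.2)

/-- An extending datum is a dendriform extending structure when the unified
product `D ♮ V` is a dendriform algebra. -/
def IsExtendingStructure (s p : D → D → D) (Ω : ExtendingDatum D V) : Prop :=
  Ω.Bilinear ∧ IsDendriform (uSucc s Ω) (uPrec p Ω)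

/-- Conditions (E1)–(E5) on a pair of linear maps `g : V → D`, `h : V → V`
relating two extending datums `Ω`, `Ω'`. -/
def ECond (s p : D → D → D) (Ω Ω' : ExtendingDatum D V) (g : V → D) (h : V → V) : Prop :=
  -- (E1)
  (∀ a x, h (Ω.tr1 a x) = Ω'.tr1 a (h x)) ∧
  (∀ a x, h (Ω.tr2 a x) = Ω'.tr2 a (h x)) ∧
  (∀ a x, h (Ω.sl1 x a) = Ω'.sl1 (h x) a) ∧
  (∀ a x, h (Ω.sl2 x a) = Ω'.sl2 (h x) a) ∧
  -- (E2)
  (∀ a x, Ω.hr1 x a + g (Ω.sl1 x a) = s (g x) a + Ω'.hr1 (h x) a) ∧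
  (∀ a x, Ω.hr2 x a + g (Ω.sl2 x a) = p (g x) a + Ω'.hr2 (h x) a) ∧
  -- (E3)
  (∀ a x, Ω.hl1 a x + g (Ω.tr1 a x) = s a (g x) + Ω'.hl1 a (h x)) ∧
  (∀ a x, Ω.hl2 a x + g (Ω.tr2 a x) = p a (g x) + Ω'.hl2 a (h x)) ∧
  -- (E4)
  (∀ x y, Ω.cf1 x y + g (Ω.sv x y) =
      s (g x) (g y) + Ω'.hl1 (g x) (h y) + Ω'.hr1 (h x) (g y) + Ω'.cf1 (h x) (h y)) ∧
  (∀ x y, Ω.cf2 x y + g (Ω.pv x y) =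
      p (g x) (g y) + Ω'.hl2 (g x) (h y) + Ω'.hr2 (h x) (g y) + Ω'.cf2 (h x) (h y)) ∧
  -- (E5)
  (∀ x y, h (Ω.sv x y) = Ω'.tr1 (g x) (h y) + Ω'.sl1 (h x) (g y) + Ω'.sv (h x) (h y)) ∧
  (∀ x y, h (Ω.pv x y) = Ω'.tr2 (g x) (h y) + Ω'.sl2 (h x) (g y) + Ω'.pv (h x) (h y))

/-- A deformation map of an extending structure `Ω(D,V)`. -/
def IsDeformationMap (s p : D → D → D) (Ω : ExtendingDatum D V) (d : V → D) : Prop :=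
  IsLinearMap ℂ d ∧
  (∀ x y, s (d x) (d y) - d (Ω.sv x y) =
      d (Ω.tr1 (d x) y + Ω.sl1 x (d y)) - Ω.hl1 (d x) y - Ω.hr1 x (d y) - Ω.cf1 x y) ∧
  (∀ x y, p (d x) (d y) - d (Ω.pv x y) =
      d (Ω.tr2 (d x) y + Ω.sl2 x (d y)) - Ω.hl2 (d x) y - Ω.hr2 x (d y) - Ω.cf2 x y)

/-- The operation `≻_d` of the deformation `V_d` of `V`. -/
def defSucc (Ω : ExtendingDatum D V) (d : V → D) : V → V → V :=
  fun x y => Ω.sv x y + Ω.tr1 (d x) y + Ω.sl1 x (d y)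

/-- The operation `≺_d` of the deformation `V_d` of `V`. -/
def defPrec (Ω : ExtendingDatum D V) (d : V → D) : V → V → V :=
  fun x y => Ω.pv x y + Ω.tr2 (d x) y + Ω.sl2 x (d y)

end Datum

section Canonical

variable {E : Type*} [AddCommGroup E] [Module ℂ E]

theorem sub_mem_ker (D : Submodule ℂ E) (ρ : E →ₗ[ℂ] E)
    (hρD : ∀ u, ρ u ∈ D) (hfix : ∀ a ∈ D, ρ a = a) (u : E) :
    u - ρ u ∈ LinearMap.ker ρ := by
  have h := hfix (ρ u) (hρD u)
  simp [LinearMap.mem_ker, map_sub, h]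

/-- The canonical extending datum of `D` through `V = ker ρ` associated to a
dendriform algebra structure `(sE, pE)` on `E` and a linear retraction
`ρ : E → D`. -/
def canonicalDatum (sE pE : E → E → E) (D : Submodule ℂ E) (ρ : E →ₗ[ℂ] E)
    (hρD : ∀ u, ρ u ∈ D) (hfix : ∀ a ∈ D, ρ a = a) :
    ExtendingDatum ↥D ↥(LinearMap.ker ρ) where
  tr1 := fun a x => ⟨sE a.1 x.1 - ρ (sE a.1 x.1), sub_mem_ker D ρ hρD hfix _⟩
  tr2 := fun a x => ⟨pE a.1 x.1 - ρ (pE a.1 x.1), sub_mem_ker D ρ hρD hfix _⟩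
  sl1 := fun x a => ⟨sE x.1 a.1 - ρ (sE x.1 a.1), sub_mem_ker D ρ hρD hfix _⟩
  sl2 := fun x a => ⟨pE x.1 a.1 - ρ (pE x.1 a.1), sub_mem_ker D ρ hρD hfix _⟩
  hr1 := fun x a => ⟨ρ (sE x.1 a.1), hρD _⟩
  hr2 := fun x a => ⟨ρ (pE x.1 a.1), hρD _⟩
  hl1 := fun a x => ⟨ρ (sE a.1 x.1), hρD _⟩
  hl2 := fun a x => ⟨ρ (pE a.1 x.1), hρD _⟩
  cf1 := fun x y => ⟨ρ (sE x.1 y.1), hρD _⟩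
  cf2 := fun x y => ⟨ρ (pE x.1 y.1), hρD _⟩
  sv := fun x y => ⟨sE x.1 y.1 - ρ (sE x.1 y.1), sub_mem_ker D ρ hρD hfix _⟩
  pv := fun x y => ⟨pE x.1 y.1 - ρ (pE x.1 y.1), sub_mem_ker D ρ hρD hfix _⟩

/-- The pair of operations on `E` associated to an extending datum of `D`
through `V = ker ρ` (the map `Υ₂`). -/
def datumToOps (D : Submodule ℂ E) (ρ : E →ₗ[ℂ] E)
    (hρD : ∀ u, ρ u ∈ D) (hfix : ∀ a ∈ D, ρ a = a) (sD pD : ↥D → ↥D → ↥D)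
    (Ω : ExtendingDatum ↥D ↥(LinearMap.ker ρ)) : (E → E → E) × (E → E → E) :=
  let dp : E → ↥D := fun u => ⟨ρ u, hρD u⟩
  let vp : E → ↥(LinearMap.ker ρ) := fun u => ⟨u - ρ u, sub_mem_ker D ρ hρD hfix u⟩
  (fun u v =>
     (sD (dp u) (dp v) : E) + (Ω.hl1 (dp u) (vp v) : E) + (Ω.hr1 (vp u) (dp v) : E)
       + (Ω.cf1 (vp u) (vp v) : E) + (Ω.tr1 (dp u) (vp v) : E) + (Ω.sl1 (vp u) (dp v) : E)
       + (Ω.sv (vp u) (vp v) : E),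
   fun u v =>
     (pD (dp u) (dp v) : E) + (Ω.hl2 (dp u) (vp v) : E) + (Ω.hr2 (vp u) (dp v) : E)
       + (Ω.cf2 (vp u) (vp v) : E) + (Ω.tr2 (dp u) (vp v) : E) + (Ω.sl2 (vp u) (dp v) : E)
       + (Ω.pv (vp u) (vp v) : E))

end Canonical

end DendriformES

namespace DendriformES

variable {D : Type*} [AddCommGroup D] [Module ℂ D]

/-- The data of a flag datum of a dendriform algebra `D`: linear maps
`l₁,l₂,r₁,r₂ : D → ℂ`, `p₁,p₂,q₁,q₂ : D → D`, elements `a₁,a₂ ∈ D` and scalars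
`k₁,k₂ ∈ ℂ`. -/
structure FlagTuple (D : Type*) [AddCommGroup D] [Module ℂ D] where
  l1 : D →ₗ[ℂ] ℂ
  l2 : D →ₗ[ℂ] ℂ
  r1 : D →ₗ[ℂ] ℂ
  r2 : D →ₗ[ℂ] ℂ
  p1 : D →ₗ[ℂ] D
  p2 : D →ₗ[ℂ] D
  q1 : D →ₗ[ℂ] D
  q2 : D →ₗ[ℂ] D
  a1 : D
  a2 : D
  k1 : ℂ
  k2 : ℂ

/-- The extending datum of `D` through the one-dimensional space `V = ℂx`
(identified with `ℂ`, with basis `x = 1`) associated to a flag tuple, all maps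
being extended bilinearly. -/
noncomputable def flagDatum (F : FlagTuple D) : ExtendingDatum D ℂ where
  tr1 := fun a t => F.l1 a * t
  tr2 := fun a t => F.l2 a * t
  sl1 := fun t a => F.r1 a * t
  sl2 := fun t a => F.r2 a * t
  hr1 := fun t a => t • F.p1 a
  hr2 := fun t a => t • F.p2 a
  hl1 := fun a t => t • F.q1 a
  hl2 := fun a t => t • F.q2 a
  cf1 := fun t u => (t * u) • F.a1
  cf2 := fun t u => (t * u) • F.a2
  sv := fun t u => F.k1 * (t * u)
  pv := fun t u => F.k2 * (t * u)

/-- Conditions (F1)–(F12) on a flag tuple. -/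
def FlagConds (s p : D → D → D) (F : FlagTuple D) : Prop :=
  -- (F1)
  (∀ a b, F.l1 (s a b + p a b) = F.l1 a * F.l1 b) ∧
  (∀ a b, F.l2 (p a b) = F.l2 a * (F.l1 b + F.l2 b)) ∧
  (∀ a b, F.l2 (s a b) = F.l1 a * F.l2 b) ∧
  (∀ a b, (F.r1 a + F.r2 a) * F.r1 b = F.r1 (s a b)) ∧
  (∀ a b, F.r2 a * F.r2 b = F.r2 (s a b + p a b)) ∧
  (∀ a b, F.r1 a * F.r2 b = F.r1 (p a b)) ∧
  (∀ a b, F.l2 a * F.r1 b = 0) ∧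
  -- (F2)
  (∀ a b, F.q1 (s a b + p a b) = s a (F.q1 b) + F.l1 b • F.q1 a) ∧
  (∀ a b, F.q2 (p a b) = p a (F.q1 b + F.q2 b) + (F.l1 b + F.l2 b) • F.q2 a) ∧
  (∀ a b, F.q2 (s a b) = s a (F.q2 b) + F.l2 b • F.q1 a) ∧
  -- (F3)
  (∀ a b, s (F.p1 a + F.p2 a) b + (F.r1 a + F.r2 a) • F.p1 b = F.p1 (s a b)) ∧
  (∀ a b, p (F.p2 a) b + F.r2 a • F.p2 b = F.p2 (s a b + p a b)) ∧
  (∀ a b, p (F.p1 a) b + F.r1 a • F.p2 b = F.p1 (p a b)) ∧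
  -- (F4)
  (∀ a b, s (F.q1 a + F.q2 a) b + (F.l1 a + F.l2 a) • F.p1 b =
    s a (F.p1 b) + F.r1 b • F.q1 a) ∧
  (∀ a b, p (F.q2 a) b + F.l2 a • F.p2 b =
    p a (F.p1 b + F.p2 b) + (F.r1 b + F.r2 b) • F.q2 a) ∧
  (∀ a b, p (F.q1 a) b + F.l1 a • F.p2 b = s a (F.p2 b) + F.r2 b • F.q1 a) ∧
  -- (F5)
  (∀ a, s (F.a1 + F.a2) a + (F.k1 + F.k2) • F.p1 a = F.p1 (F.p1 a) + F.r1 a • F.a1) ∧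
  (∀ a, p F.a2 a + F.k2 • F.p2 a = F.p2 (F.p1 a + F.p2 a) + (F.r1 a + F.r2 a) • F.a2) ∧
  (∀ a, p F.a1 a + F.k1 • F.p2 a = F.p1 (F.p2 a) + F.r2 a • F.a1) ∧
  -- (F6)
  (∀ a, F.k2 * F.r1 a = F.r1 (F.p1 a)) ∧
  (∀ a, F.r2 (F.p1 a + F.p2 a) + F.k2 * F.r1 a = 0) ∧
  (∀ a, F.r1 (F.p2 a) = 0) ∧
  -- (F7)
  (∀ a, F.q1 (F.q1 a + F.q2 a) + (F.l1 a + F.l2 a) • F.a1 = s a F.a1 + F.k1 • F.q1 a) ∧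
  (∀ a, F.q2 (F.q2 a) + F.l2 a • F.a2 = p a (F.a1 + F.a2) + (F.k1 + F.k2) • F.q2 a) ∧
  (∀ a, F.q2 (F.q1 a) + F.l1 a • F.a2 = s a F.a2 + F.k2 • F.q1 a) ∧
  -- (F8)
  (∀ a, F.l1 (F.q1 a + F.q2 a) + F.k1 * F.l2 a = 0) ∧
  (∀ a, F.l2 (F.q2 a) = F.k1 * F.l2 a) ∧
  (∀ a, F.l2 (F.q1 a) = 0) ∧
  -- (F9)
  (∀ a, F.q1 (F.p1 a + F.p2 a) + (F.r1 a + F.r2 a) • F.a1 =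
    F.p1 (F.q1 a) + F.l1 a • F.a1) ∧
  (∀ a, F.q2 (F.p2 a) + F.r2 a • F.a2 =
    F.p2 (F.q1 a + F.q2 a) + (F.l1 a + F.l2 a) • F.a2) ∧
  (∀ a, F.q2 (F.p1 a) + F.r1 a • F.a2 = F.p1 (F.q2 a) + F.l2 a • F.a1) ∧
  -- (F10)
  (∀ a, F.l1 (F.p1 a + F.p2 a) + (F.r1 a + F.r2 a) * F.k1 =
    F.r1 (F.q1 a) + F.k1 * F.l1 a) ∧
  (∀ a, F.l2 (F.p2 a) + F.r2 a * F.k2 =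
    F.r2 (F.q1 a + F.q2 a) + F.k2 * (F.l1 a + F.l2 a)) ∧
  (∀ a, F.l2 (F.p1 a) + F.r1 a * F.k2 = F.r1 (F.q2 a) + F.k1 * F.l2 a) ∧
  -- (F11)
  (F.q1 (F.a1 + F.a2) + F.k2 • F.a1 = F.p1 F.a1) ∧
  (F.q2 F.a2 = F.p2 (F.a1 + F.a2) + F.k1 • F.a2) ∧
  (F.q2 F.a1 + F.k1 • F.a2 = F.p1 F.a2 + F.k2 • F.a1) ∧
  -- (F12)
  (F.l1 (F.a1 + F.a2) + F.k2 * F.k1 = F.r1 F.a1) ∧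
  (F.l2 F.a2 = F.r2 (F.a1 + F.a2) + F.k2 * F.k1) ∧
  (F.l2 F.a1 = F.r1 F.a2)

/-! ### Bilinear maps -/

section Bilinear

variable {M N P : Type*} [AddCommGroup M] [Module ℂ M] [AddCommGroup N] [Module ℂ N]
  [AddCommGroup P] [Module ℂ P]

theorem IsBilinear.left {f : M → N → P} (hf : IsBilinear f) (y : N) :
    IsLinearMap ℂ (fun a => f a y) :=
  ⟨fun a b => hf.1 a b y, fun c a => hf.2.1 c a y⟩

theorem IsBilinear.right {f : M → N → P} (hf : IsBilinear f) (a : M) :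
    IsLinearMap ℂ (f a) :=
  ⟨fun x y => hf.2.2.1 a x y, fun c x => hf.2.2.2 c a x⟩

theorem IsBilinear.zero_left {f : M → N → P} (hf : IsBilinear f) (y : N) : f 0 y = 0 :=
  (hf.left y).map_zero

theorem IsBilinear.zero_right {f : M → N → P} (hf : IsBilinear f) (a : M) : f a 0 = 0 :=
  (hf.right a).map_zero

end Bilinear

/-! ### Testing the dendriform axioms on generators -/

section Generators

variable {E : Type*} [AddCommGroup E] [Module ℂ E]

theorem linear_eq {f g : D × ℂ → E} (hf : IsLinearMap ℂ f) (hg : IsLinearMap ℂ g)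
    (hD : ∀ a, f (a, 0) = g (a, 0)) (hV : f (0, 1) = g (0, 1)) (u : D × ℂ) : f u = g u := by
  have hu : u = (u.1, 0) + u.2 • ((0, 1) : D × ℂ) := by ext <;> simp
  rw [hu, hf.map_add, hf.map_smul, hg.map_add, hg.map_smul, hD, hV]

/-- The vectors `(a, 0)` and `(0, 1)`, which span `D × ℂ`. -/
def IsGenerator (u : D × ℂ) : Prop := (∃ a, u = (a, 0)) ∨ u = (0, 1)

theorem trilinear_eq {f g : D × ℂ → D × ℂ → D × ℂ → E}
    (hf₁ : ∀ v w, IsLinearMap ℂ (fun u => f u v w)) (hg₁ : ∀ v w, IsLinearMap ℂ (fun u => g u v w))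
    (hf₂ : ∀ u w, IsLinearMap ℂ (fun v => f u v w)) (hg₂ : ∀ u w, IsLinearMap ℂ (fun v => g u v w))
    (hf₃ : ∀ u v, IsLinearMap ℂ (f u v)) (hg₃ : ∀ u v, IsLinearMap ℂ (g u v))
    (h : ∀ u v w, IsGenerator u → IsGenerator v → IsGenerator w → f u v w = g u v w)
    (u v w : D × ℂ) : f u v w = g u v w := by
  have hgen (a : D) : IsGenerator ((a, 0) : D × ℂ) := Or.inl ⟨a, rfl⟩
  have hone : IsGenerator ((0, 1) : D × ℂ) := Or.inr rfl
  have h3 (u v) (hu : IsGenerator u) (hv : IsGenerator v) (w) : f u v w = g u v w :=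
    linear_eq (hf₃ u v) (hg₃ u v) (fun a => h _ _ _ hu hv (hgen a)) (h _ _ _ hu hv hone) w
  have h2 (u) (hu : IsGenerator u) (v w) : f u v w = g u v w :=
    linear_eq (hf₂ u w) (hg₂ u w) (fun a => h3 _ _ hu (hgen a) w) (h3 _ _ hu hone w) v
  exact linear_eq (hf₁ v w) (hg₁ v w) (fun a => h2 _ (hgen a) v w) (h2 _ hone v w) u

/-- The dendriform axioms for a pair of bilinear operations on `D × ℂ` may be tested on
generators. -/
theorem dendAxioms_of_generators {S P : D × ℂ → D × ℂ → D × ℂ}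
    (hS : IsBilinear S) (hP : IsBilinear P)
    (h : ∀ u v w, IsGenerator u → IsGenerator v → IsGenerator w →
      S (S u v + P u v) w = S u (S v w) ∧ P (P u v) w = P u (S v w + P v w) ∧
        P (S u v) w = S u (P v w)) :
    DendAxioms S P := by
  obtain ⟨sa, sm, sa', sm'⟩ := hS
  obtain ⟨pa, pm, pa', pm'⟩ := hP
  refine ⟨?_, ?_, ?_⟩
  · refine trilinear_eq (f := fun u v w => S (S u v + P u v) w) (g := fun u v w => S u (S v w))
      ?_ ?_ ?_ ?_ ?_ ?_ (fun u v w hu hv hw => (h u v w hu hv hw).1) <;>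
    · intro _ _
      constructor <;> intros <;> simp only [sa, sm, sa', sm', pa, pm, pa', pm'] <;> module
  · refine trilinear_eq (f := fun u v w => P (P u v) w) (g := fun u v w => P u (S v w + P v w))
      ?_ ?_ ?_ ?_ ?_ ?_ (fun u v w hu hv hw => (h u v w hu hv hw).2.1) <;>
    · intro _ _
      constructor <;> intros <;> simp only [sa, sm, sa', sm', pa, pm, pa', pm'] <;> module
  · refine trilinear_eq (f := fun u v w => P (S u v) w) (g := fun u v w => S u (P v w))
      ?_ ?_ ?_ ?_ ?_ ?_ (fun u v w hu hv hw => (h u v w hu hv hw).2.2) <;>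
    · intro _ _
      constructor <;> intros <;> simp only [sa, sm, sa', sm', pa, pm, pa', pm']

end Generators

/-! ### Flag tuples and the dendriform axioms of the unified product -/

section Flag

theorem flagDatum_bilinear (F : FlagTuple D) : (flagDatum F).Bilinear := by
  refine ⟨?_, ?_, ?_, ?_, ?_, ?_, ?_, ?_, ?_, ?_, ?_, ?_⟩ <;>
  · refine ⟨?_, ?_, ?_, ?_⟩ <;> intros <;>
      simp only [flagDatum, map_add, map_smul, smul_eq_mul] <;> first | ring1 | module

variable {V : Type*} [AddCommGroup V] [Module ℂ V]

theorem uSucc_bilinear {s : D → D → D} (hs : IsBilinear s) {Ω : ExtendingDatum D V}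
    (hΩ : Ω.Bilinear) : IsBilinear (uSucc s Ω) := by
  obtain ⟨h1, -, h2, -, h3, -, h4, -, h5, -, h6, -⟩ := hΩ
  unfold IsBilinear at hs h1 h2 h3 h4 h5 h6
  refine ⟨?_, ?_, ?_, ?_⟩ <;> intros <;> ext <;>
    simp only [uSucc, Prod.fst_add, Prod.snd_add, Prod.smul_fst, Prod.smul_snd, hs, h1, h2, h3, h4,
      h5, h6] <;> module

theorem uPrec_bilinear {p : D → D → D} (hp : IsBilinear p) {Ω : ExtendingDatum D V}
    (hΩ : Ω.Bilinear) : IsBilinear (uPrec p Ω) := by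
  obtain ⟨-, h1, -, h2, -, h3, -, h4, -, h5, -, h6⟩ := hΩ
  unfold IsBilinear at hp h1 h2 h3 h4 h5 h6
  refine ⟨?_, ?_, ?_, ?_⟩ <;> intros <;> ext <;>
    simp only [uPrec, Prod.fst_add, Prod.snd_add, Prod.smul_fst, Prod.smul_snd, hp, h1, h2, h3, h4,
      h5, h6] <;> module

theorem flagConds_of_dendAxioms {s p : D → D → D} (hs : IsBilinear s) (hp : IsBilinear p)
    {F : FlagTuple D} (h : DendAxioms (uSucc s (flagDatum F)) (uPrec p (flagDatum F))) :
    FlagConds s p F := by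
  obtain ⟨A1, A2, A3⟩ := h
  have sl := hs.zero_left
  have sr := hs.zero_right
  have pl := hp.zero_left
  have pr := hp.zero_right
  -- The equations of each shape of triple of generators; `V` stands for the generator `(0, 1)`.
  have DDV1 (a b : D) := A1 (a, 0) (b, 0) (0, 1)
  have DDV2 (a b : D) := A2 (a, 0) (b, 0) (0, 1)
  have DDV3 (a b : D) := A3 (a, 0) (b, 0) (0, 1)
  have VDD1 (a b : D) := A1 (0, 1) (a, 0) (b, 0)
  have VDD2 (a b : D) := A2 (0, 1) (a, 0) (b, 0)
  have VDD3 (a b : D) := A3 (0, 1) (a, 0) (b, 0)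
  have DVD1 (a b : D) := A1 (a, 0) (0, 1) (b, 0)
  have DVD2 (a b : D) := A2 (a, 0) (0, 1) (b, 0)
  have DVD3 (a b : D) := A3 (a, 0) (0, 1) (b, 0)
  have VVD1 (a : D) := A1 (0, 1) (0, 1) (a, 0)
  have VVD2 (a : D) := A2 (0, 1) (0, 1) (a, 0)
  have VVD3 (a : D) := A3 (0, 1) (0, 1) (a, 0)
  have DVV1 (a : D) := A1 (a, 0) (0, 1) (0, 1)
  have DVV2 (a : D) := A2 (a, 0) (0, 1) (0, 1)
  have DVV3 (a : D) := A3 (a, 0) (0, 1) (0, 1)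
  have VDV1 (a : D) := A1 (0, 1) (a, 0) (0, 1)
  have VDV2 (a : D) := A2 (0, 1) (a, 0) (0, 1)
  have VDV3 (a : D) := A3 (0, 1) (a, 0) (0, 1)
  have VVV1 := A1 (0, 1) (0, 1) (0, 1)
  have VVV2 := A2 (0, 1) (0, 1) (0, 1)
  have VVV3 := A3 (0, 1) (0, 1) (0, 1)
  simp only [uSucc, uPrec, flagDatum, Prod.mk_add_mk, Prod.mk.injEq, map_zero, sl, sr, pl, pr,
    mul_zero, zero_mul, mul_one, zero_smul, one_smul, smul_zero, add_zero, zero_add]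
    at DDV1 DDV2 DDV3 VDD1 VDD2 VDD3 DVD1 DVD2 DVD3 VVD1 VVD2 VVD3 DVV1 DVV2 DVV3 VDV1 VDV2 VDV3
      VVV1 VVV2 VVV3
  unfold FlagConds
  refine ⟨?_, ?_, ?_, ?_, ?_, ?_, ?_, ?_, ?_, ?_, ?_, ?_, ?_, ?_, ?_, ?_, ?_, ?_, ?_, ?_, ?_, ?_,
    ?_, ?_, ?_, ?_, ?_, ?_, ?_, ?_, ?_, ?_, ?_, ?_, ?_, ?_, ?_, ?_, ?_, ?_⟩
  · exact fun a b => by linear_combination (DDV1 a b).2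
  · exact fun a b => by linear_combination (DDV2 a b).2
  · exact fun a b => by linear_combination (DDV3 a b).2
  · exact fun a b => by linear_combination (VDD1 a b).2
  · exact fun a b => by linear_combination (VDD2 a b).2
  · exact fun a b => by linear_combination (VDD3 a b).2
  · exact fun a b => by linear_combination (DVD1 a b).2
  · exact fun a b => by linear_combination (norm := module) (DDV1 a b).1
  · exact fun a b => by linear_combination (norm := module) (DDV2 a b).1
  · exact fun a b => by linear_combination (norm := module) (DDV3 a b).1
  · exact fun a b => by linear_combination (norm := module) (VDD1 a b).1
  · exact fun a b => by linear_combination (norm := module) (VDD2 a b).1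
  · exact fun a b => by linear_combination (norm := module) (VDD3 a b).1
  · exact fun a b => by linear_combination (norm := module) (DVD1 a b).1
  · exact fun a b => by linear_combination (norm := module) (DVD2 a b).1
  · exact fun a b => by linear_combination (norm := module) (DVD3 a b).1
  · exact fun a => by linear_combination (norm := module) (VVD1 a).1
  · exact fun a => by linear_combination (norm := module) (VVD2 a).1
  · exact fun a => by linear_combination (norm := module) (VVD3 a).1
  · exact fun a => by linear_combination (VVD1 a).2
  · exact fun a => by linear_combination -(VVD2 a).2
  · exact fun a => by linear_combination -(VVD3 a).2
  · exact fun a => by linear_combination (norm := module) (DVV1 a).1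
  · exact fun a => by linear_combination (norm := module) (DVV2 a).1
  · exact fun a => by linear_combination (norm := module) (DVV3 a).1
  · exact fun a => by linear_combination (DVV1 a).2
  · exact fun a => by linear_combination (DVV2 a).2
  · exact fun a => by linear_combination (DVV3 a).2
  · exact fun a => by linear_combination (norm := module) (VDV1 a).1
  · exact fun a => by linear_combination (norm := module) (VDV2 a).1
  · exact fun a => by linear_combination (norm := module) (VDV3 a).1
  · exact fun a => by linear_combination (VDV1 a).2
  · exact fun a => by linear_combination (VDV2 a).2
  · exact fun a => by linear_combination (VDV3 a).2
  · linear_combination (norm := module) VVV1.1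
  · linear_combination (norm := module) VVV2.1
  · linear_combination (norm := module) VVV3.1
  · linear_combination VVV1.2
  · linear_combination VVV2.2
  · linear_combination VVV3.2

theorem dendAxioms_of_flagConds {s p : D → D → D} (hD : IsDendriform s p)
    {F : FlagTuple D} (h : FlagConds s p F) :
    DendAxioms (uSucc s (flagDatum F)) (uPrec p (flagDatum F)) := by
  obtain ⟨hs, hp, A1, A2, A3⟩ := hD
  have sl := hs.zero_left
  have sr := hs.zero_right
  have pl := hp.zero_left
  have pr := hp.zero_right
  obtain ⟨f1a, f1b, f1c, f1d, f1e, f1f, f1g, f2a, f2b, f2c, f3a, f3b, f3c, f4a, f4b, f4c,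
    f5a, f5b, f5c, f6a, f6b, f6c, f7a, f7b, f7c, f8a, f8b, f8c, f9a, f9b, f9c, f10a, f10b, f10c,
    f11a, f11b, f11c, f12a, f12b, f12c⟩ := h
  refine dendAxioms_of_generators (uSucc_bilinear hs (flagDatum_bilinear F))
    (uPrec_bilinear hp (flagDatum_bilinear F)) ?_
  rintro _ _ _ (⟨a, rfl⟩ | rfl) (⟨b, rfl⟩ | rfl) (⟨c, rfl⟩ | rfl) <;>
    simp only [uSucc, uPrec, flagDatum, Prod.mk_add_mk, Prod.mk.injEq, map_zero, sl, sr, pl, pr,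
      mul_zero, zero_mul, mul_one, zero_smul, one_smul, smul_zero, add_zero, zero_add]
  · exact ⟨⟨A1 a b c, trivial⟩, ⟨A2 a b c, trivial⟩, ⟨A3 a b c, trivial⟩⟩
  · refine ⟨⟨?_, ?_⟩, ⟨?_, ?_⟩, ⟨?_, ?_⟩⟩
    · linear_combination (norm := module) f2a a b
    · linear_combination f1a a b
    · linear_combination (norm := module) f2b a b
    · linear_combination f1b a b
    · linear_combination (norm := module) f2c a b
    · linear_combination f1c a b
  · refine ⟨⟨?_, ?_⟩, ⟨?_, ?_⟩, ⟨?_, ?_⟩⟩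
    · linear_combination (norm := module) f4a a c
    · linear_combination f1g a c
    · linear_combination (norm := module) f4b a c
    · linear_combination -f1g a c
    · linear_combination (norm := module) f4c a c
    · ring
  · refine ⟨⟨?_, ?_⟩, ⟨?_, ?_⟩, ⟨?_, ?_⟩⟩
    · linear_combination (norm := module) f7a a
    · linear_combination f8a a
    · linear_combination (norm := module) f7b a
    · linear_combination f8b a
    · linear_combination (norm := module) f7c a
    · linear_combination f8c a
  · refine ⟨⟨?_, ?_⟩, ⟨?_, ?_⟩, ⟨?_, ?_⟩⟩
    · linear_combination (norm := module) f3a b c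
    · linear_combination f1d b c
    · linear_combination (norm := module) f3b b c
    · linear_combination f1e b c
    · linear_combination (norm := module) f3c b c
    · linear_combination f1f b c
  · refine ⟨⟨?_, ?_⟩, ⟨?_, ?_⟩, ⟨?_, ?_⟩⟩
    · linear_combination (norm := module) f9a b
    · linear_combination f10a b
    · linear_combination (norm := module) f9b b
    · linear_combination f10b b
    · linear_combination (norm := module) f9c b
    · linear_combination f10c b
  · refine ⟨⟨?_, ?_⟩, ⟨?_, ?_⟩, ⟨?_, ?_⟩⟩
    · linear_combination (norm := module) f5a c
    · linear_combination f6a c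
    · linear_combination (norm := module) f5b c
    · linear_combination -f6b c
    · linear_combination (norm := module) f5c c
    · linear_combination -f6c c
  · refine ⟨⟨?_, ?_⟩, ⟨?_, ?_⟩, ⟨?_, ?_⟩⟩
    · linear_combination (norm := module) f11a
    · linear_combination f12a
    · linear_combination (norm := module) f11b
    · linear_combination f12b
    · linear_combination (norm := module) f11c
    · linear_combination f12c

/-! ### Recovering the flag tuple from the extending datum -/

theorem flagDatum_injective : Function.Injective (flagDatum (D := D)) := by
  rintro ⟨⟩ ⟨⟩ h
  simp only [flagDatum, ExtendingDatum.mk.injEq] at h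
  obtain ⟨h1, h2, h3, h4, h5, h6, h7, h8, h9, h10, h11, h12⟩ := h
  rw [FlagTuple.mk.injEq]
  refine ⟨?_, ?_, ?_, ?_, ?_, ?_, ?_, ?_, ?_, ?_, ?_, ?_⟩
  · ext a; simpa using congrFun₂ h1 a 1
  · ext a; simpa using congrFun₂ h2 a 1
  · ext a; simpa using congrFun₂ h3 1 a
  · ext a; simpa using congrFun₂ h4 1 a
  · ext a; simpa using congrFun₂ h5 1 a
  · ext a; simpa using congrFun₂ h6 1 a
  · ext a; simpa using congrFun₂ h7 a 1
  · ext a; simpa using congrFun₂ h8 a 1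
  · simpa using congrFun₂ h9 1 1
  · simpa using congrFun₂ h10 1 1
  · simpa using congrFun₂ h11 1 1
  · simpa using congrFun₂ h12 1 1

/-- The flag tuple of an extending datum of `D` through `ℂ` with bilinear maps, obtained by
evaluating every argument in `ℂ` at the basis vector `1`. -/
def toFlagTuple (Ω : ExtendingDatum D ℂ) (hΩ : Ω.Bilinear) : FlagTuple D where
  l1 := (hΩ.1.left 1).mk' _
  l2 := (hΩ.2.1.left 1).mk' _
  r1 := (hΩ.2.2.1.right 1).mk' _
  r2 := (hΩ.2.2.2.1.right 1).mk' _
  p1 := (hΩ.2.2.2.2.1.right 1).mk' _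
  p2 := (hΩ.2.2.2.2.2.1.right 1).mk' _
  q1 := (hΩ.2.2.2.2.2.2.1.left 1).mk' _
  q2 := (hΩ.2.2.2.2.2.2.2.1.left 1).mk' _
  a1 := Ω.cf1 1 1
  a2 := Ω.cf2 1 1
  k1 := Ω.sv 1 1
  k2 := Ω.pv 1 1

theorem IsBilinear.apply_left_scalar {f : ℂ → D → V} (hf : IsBilinear f) (t : ℂ) (a : D) :
    t • f 1 a = f t a := by
  rw [← hf.2.1, smul_eq_mul, mul_one]

theorem IsBilinear.apply_right_scalar {f : D → ℂ → V} (hf : IsBilinear f) (a : D) (t : ℂ) :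
    t • f a 1 = f a t := by
  rw [← hf.2.2.2, smul_eq_mul, mul_one]

theorem flagDatum_toFlagTuple (Ω : ExtendingDatum D ℂ) (hΩ : Ω.Bilinear) :
    flagDatum (toFlagTuple Ω hΩ) = Ω := by
  have hΩ' := hΩ
  obtain ⟨h1, h2, h3, h4, h5, h6, h7, h8, h9, h10, h11, h12⟩ := hΩ'
  cases Ω
  simp only [flagDatum, toFlagTuple, IsLinearMap.mk'_apply, ExtendingDatum.mk.injEq]
  refine ⟨?_, ?_, ?_, ?_, ?_, ?_, ?_, ?_, ?_, ?_, ?_, ?_⟩ <;> funext x y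
  · rw [mul_comm]; exact h1.apply_right_scalar x y
  · rw [mul_comm]; exact h2.apply_right_scalar x y
  · rw [mul_comm]; exact h3.apply_left_scalar x y
  · rw [mul_comm]; exact h4.apply_left_scalar x y
  · exact h5.apply_left_scalar x y
  · exact h6.apply_left_scalar x y
  · exact h7.apply_right_scalar x y
  · exact h8.apply_right_scalar x y
  · rw [mul_smul, h9.apply_right_scalar, h9.apply_left_scalar]
  · rw [mul_smul, h10.apply_right_scalar, h10.apply_left_scalar]
  · rw [mul_comm, ← smul_eq_mul, mul_smul, h11.apply_right_scalar, h11.apply_left_scalar]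
  · rw [mul_comm, ← smul_eq_mul, mul_smul, h12.apply_right_scalar, h12.apply_left_scalar]

end Flag

/-- the extending datum associated to a flag tuple is a dendriform
extending structure of `D` through `V = ℂ` iff conditions (F1)–(F12) hold;
moreover this assignment is a bijection from flag datums of `D` onto the
dendriform extending structures of `D` through `V`. -/
theorem flagDatum_isExtendingStructure_iff
    (s p : D → D → D) (hD : IsDendriform s p) :
    (∀ F : FlagTuple D,
      IsExtendingStructure s p (flagDatum F) ↔ FlagConds s p F) ∧
    Set.BijOn (flagDatum (D := D)) {F | FlagConds s p F}
      {Ω : ExtendingDatum D ℂ | IsExtendingStructure s p Ω} := by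
  have key (F : FlagTuple D) : IsExtendingStructure s p (flagDatum F) ↔ FlagConds s p F :=
    ⟨fun h => flagConds_of_dendAxioms hD.1 hD.2.1 h.2.2.2,
      fun h => ⟨flagDatum_bilinear F, uSucc_bilinear hD.1 (flagDatum_bilinear F),
        uPrec_bilinear hD.2.1 (flagDatum_bilinear F), dendAxioms_of_flagConds hD h⟩⟩
  refine ⟨key, fun F hF => (key F).2 hF, flagDatum_injective.injOn, fun Ω hΩ => ?_⟩
  have hF := flagDatum_toFlagTuple Ω hΩ.1
  exact ⟨toFlagTuple Ω hΩ.1, (key _).1 (by rw [hF]; exact hΩ), hF⟩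

end DendriformES
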